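/- Let ρ_RQE be a state on H_R⊗H_Q⊗H_E (all finite-dimensional) with I(R;E|Q)_ρ = 0. Then for all finite-dimensional Hilbert spaces H_{Q'}, H_{E'} and every isometry V : H_Q⊗H_E → H_{Q'}⊗H_{E'}, there exists a CPTP map 𝓔 : L(H_Q) → L(H_{Q'}) such that Tr_{E'}[(1_R⊗V) ρ_RQE (1_R⊗V)†] = (id_R⊗𝓔)(ρ_RQ). -/

import Mathlib

open Matrix Kronecker ComplexOrder

noncomputable section

/-- Von Neumann entropy `S(ρ) = -Tr[ρ log ρ]`, computed from the eigenvalues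
(junk value `0` if `ρ` is not Hermitian). -/
def vnEntropy {n : Type*} [Fintype n] [DecidableEq n] (ρ : Matrix n n ℂ) : ℝ :=
  if h : ρ.IsHermitian then ∑ i, Real.negMulLog (h.eigenvalues i) else 0

/-- Partial trace over the first tensor factor. -/
def ptraceLeft {A B : Type*} [Fintype A] (M : Matrix (A × B) (A × B) ℂ) : Matrix B B ℂ :=
  Matrix.of fun x y => ∑ a, M (a, x) (a, y)

/-- Partial trace over the second tensor factor. -/
def ptraceRight {A B : Type*} [Fintype B] (M : Matrix (A × B) (A × B) ℂ) : Matrix A A ℂ :=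
  Matrix.of fun x y => ∑ b, M (x, b) (y, b)

/-- Partial trace over the last factor of a tripartite operator on `R ⊗ Q ⊗ E`. -/
def ptrace3E {R Q E : Type*} [Fintype E] (M : Matrix (R × Q × E) (R × Q × E) ℂ) :
    Matrix (R × Q) (R × Q) ℂ :=
  Matrix.of fun x y => ∑ e, M (x.1, x.2, e) (y.1, y.2, e)

/-- A state is a positive semidefinite operator with unit trace. -/
def IsState {n : Type*} [Fintype n] (ρ : Matrix n n ℂ) : Prop :=
  ρ.PosSemidef ∧ ρ.trace = 1

/-- Quantum mutual information `I(A;B) = S(ρ_A) + S(ρ_B) - S(ρ_AB)`. -/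
def mutualInfo {A B : Type*} [Fintype A] [DecidableEq A] [Fintype B] [DecidableEq B]
    (ρ : Matrix (A × B) (A × B) ℂ) : ℝ :=
  vnEntropy (ptraceRight ρ) + vnEntropy (ptraceLeft ρ) - vnEntropy ρ

/-- Conditional quantum mutual information
`I(R;E|Q) = S(ρ_RQ) + S(ρ_QE) - S(ρ_RQE) - S(ρ_Q)`. -/
def condMutualInfo {R Q E : Type*} [Fintype R] [DecidableEq R] [Fintype Q] [DecidableEq Q]
    [Fintype E] [DecidableEq E] (ρ : Matrix (R × Q × E) (R × Q × E) ℂ) : ℝ :=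
  vnEntropy (ptrace3E ρ) + vnEntropy (ptraceLeft ρ) - vnEntropy ρ
    - vnEntropy (ptraceLeft (ptrace3E ρ))

/-- The map `id_n ⊗ Φ` obtained by applying `Φ` blockwise. -/
def idTensor {A B : Type*} (n : Type*) (Φ : Matrix A A ℂ →ₗ[ℂ] Matrix B B ℂ)
    (M : Matrix (n × A) (n × A) ℂ) : Matrix (n × B) (n × B) ℂ :=
  Matrix.of fun x y => Φ (Matrix.of fun a b => M (x.1, a) (y.1, b)) x.2 y.2

/-- Complete positivity: for every `k`, `id_{Fin k} ⊗ Φ` preserves positive semidefiniteness. -/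
def IsCPMap {A B : Type*} [Fintype A] [Fintype B]
    (Φ : Matrix A A ℂ →ₗ[ℂ] Matrix B B ℂ) : Prop :=
  ∀ (k : ℕ) (M : Matrix (Fin k × A) (Fin k × A) ℂ), M.PosSemidef →
    (idTensor (Fin k) Φ M).PosSemidef

/-- A CPTP map (quantum channel). -/
def IsCPTP {A B : Type*} [Fintype A] [Fintype B]
    (Φ : Matrix A A ℂ →ₗ[ℂ] Matrix B B ℂ) : Prop :=
  IsCPMap Φ ∧ ∀ M : Matrix A A ℂ, (Φ M).trace = M.trace

/-- The family of states on `Q ⊗ E` steered from `R` by measurements on a tripartite state. -/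
def steered {R Q E : Type*} [Fintype R] [Fintype Q] [DecidableEq Q] [Fintype E] [DecidableEq E]
    (ρ : Matrix (R × Q × E) (R × Q × E) ℂ) : Set (Matrix (Q × E) (Q × E) ℂ) :=
  { ω | ∃ P : Matrix R R ℂ, P.PosSemidef ∧
      (ptraceLeft ((P ⊗ₖ (1 : Matrix (Q × E) (Q × E) ℂ)) * ρ)).trace ≠ 0 ∧
      ω = ((ptraceLeft ((P ⊗ₖ (1 : Matrix (Q × E) (Q × E) ℂ)) * ρ)).trace)⁻¹ •
            ptraceLeft ((P ⊗ₖ (1 : Matrix (Q × E) (Q × E) ℂ)) * ρ) }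

/-- A post-selected family of bipartite system-environment states: the normalized
output state space of some completely positive map `𝒫 : Q₀E₀ → QE`. -/
def IsPostSelected {Q E : Type*} [Fintype Q] [Fintype E]
    (S : Set (Matrix (Q × E) (Q × E) ℂ)) : Prop :=
  ∃ (n0 m0 : ℕ)
    (P : Matrix (Fin n0 × Fin m0) (Fin n0 × Fin m0) ℂ →ₗ[ℂ] Matrix (Q × E) (Q × E) ℂ),
    IsCPMap P ∧
    S = { ω | ∃ ρ0, IsState ρ0 ∧ (P ρ0).trace ≠ 0 ∧ ω = ((P ρ0).trace)⁻¹ • P ρ0 }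

/-!
The condition `I(R;E|Q) = 0` says that the relative entropy of `ρ` with respect to `1 ⊗ ρ_QE` does
not decrease when `E` is discarded. Equality in the monotonicity of the relative entropy forces
`ρ` to be reconstructed from `ρ_RQ` by the Petz recovery map, which acts on `Q` alone; composing
that map with a channel on `QE` gives the reduced dynamics on `Q`.

For the equality case, write `σ = 1 ⊗ ρ_QE`, `ρ' = ρ_RQ` and `σ' = 1 ⊗ ρ_Q`. The relative entropy
of `ρ` and `σ` is the value at `t = 0` of `t ↦ Tr[ρ (log (ρ + t σ) - log σ)]`, with `ρ` and `σ`
understood as the commuting operators of left multiplication by `ρ` and right multiplication by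
`σ`. Its derivative in `t` is, up to terms depending only on traces, `-t` times the squared norm of
the vector representing the functional `X ↦ Tr[X σ]` in the inner product weighted by `ρ + t σ`.
The embedding `X ↦ X ⊗ 1_E` is isometric for these inner products, and the representing vector for
`ρ', σ'` is the projection of the one for `ρ, σ`. So the derivatives are ordered, and equality at
`t = 0` makes the two representing vectors agree for all `t > 0`. Interpolating the square root by
resolvents gives `(ρ'^{1/2} σ'^{-1/2}) ⊗ 1_E = ρ^{1/2} σ^{-1/2}` on the support of `σ`, which is
Petz's formula.
-/

open RCLike

section LagrangeInterpolation

lemma exists_forall_mem_eq_sum_mul_inv {K : Type*} [Field K] (X : Finset K)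
    (v : K → K) (hv : Set.InjOn v X) (hX : ∀ x ∈ X, ∀ y ∈ X, x ≠ v y) (f : K → K) :
    ∃ a : K → K, ∀ x ∈ X, f x = ∑ y ∈ X, a y * (x - v y)⁻¹ := by
  classical
  let P := Lagrange.interpolate X id fun x => f x * (Lagrange.nodal X v).eval x
  refine ⟨fun y => Lagrange.nodalWeight X v y * P.eval (v y), fun x hx => ?_⟩
  have hnodal : (Lagrange.nodal X v).eval x ≠ 0 := by
    rw [Lagrange.eval_nodal]
    exact Finset.prod_ne_zero_iff.2 fun y hy => sub_ne_zero.2 (hX x hx y hy)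
  have hinterp : P = Lagrange.interpolate X v fun y => P.eval (v y) :=
    Lagrange.eq_interpolate hv (Lagrange.degree_interpolate_lt _ Function.injective_id.injOn)
  have heval : P.eval x = f x * (Lagrange.nodal X v).eval x :=
    Lagrange.eval_interpolate_at_node _ Function.injective_id.injOn hx
  rw [hinterp, Lagrange.eval_interpolate_not_at_node _ fun y hy => hX x hx y hy, mul_comm] at heval
  rw [← mul_right_cancel₀ hnodal heval]
  exact Finset.sum_congr rfl fun y _ => mul_right_comm _ _ _

end LagrangeInterpolation

section WeightedInner

variable {κ : Type*} [Fintype κ]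

lemma wInner_self_eq_sum (w : κ → ℝ) (x : κ → ℂ) :
    ⟪x, x⟫_[ℂ, w] = ((∑ k, w k * ‖x k‖ ^ 2 : ℝ) : ℂ) := by
  simp [wInner, inner_self_eq_norm_sq_to_K]

lemma eq_zero_of_wInner_self_eq_zero {w : κ → ℝ} (hw : ∀ k, 0 ≤ w k) {x : κ → ℂ}
    (h : ⟪x, x⟫_[ℂ, w] = 0) {k : κ} (hk : w k ≠ 0) : x k = 0 := by
  rw [wInner_self_eq_sum, Complex.ofReal_eq_zero,
    Finset.sum_eq_zero_iff_of_nonneg fun k _ => mul_nonneg (hw k) (sq_nonneg _)] at h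
  simpa [hk] using h k (Finset.mem_univ k)

lemma wInner_add_smul_weight (w v : κ → ℝ) (t : ℝ) (x y : κ → ℂ) :
    ⟪x, y⟫_[ℂ, w + t • v] = ⟪x, y⟫_[ℂ, w] + t * ⟪x, y⟫_[ℂ, v] := by
  simp [wInner, add_mul, Finset.sum_add_distrib, Finset.mul_sum, mul_assoc]

end WeightedInner

/-- Joint spectral data of two commuting positive operators with eigenvalues `fst` and `snd`,
together with the coordinates `vec` of a vector in a joint eigenbasis. The last field says that
the vector has no component on which the second operator vanishes but the first one does not. -/
structure SpectralPair (κ : Type*) where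
  fst : κ → ℝ
  snd : κ → ℝ
  vec : κ → ℂ
  fst_nonneg : ∀ k, 0 ≤ fst k
  snd_nonneg : ∀ k, 0 ≤ snd k
  vec_eq_zero_or_fst_eq_zero : ∀ k, snd k = 0 → vec k = 0 ∨ fst k = 0

namespace SpectralPair

variable {κ κ' : Type*} {A : SpectralPair κ} {A' : SpectralPair κ'} {t : ℝ}

/-- The vector `snd / (fst + t • snd) • vec`, representing the functional `⟨vec, · ⟩_snd` for the
inner product with weight `fst + t • snd`. -/
def resolvent (A : SpectralPair κ) (t : ℝ) : κ → ℂ :=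
  fun k => A.vec k * ((A.snd k / (A.fst k + t * A.snd k) : ℝ) : ℂ)

lemma weight_nonneg (ht : 0 < t) (k : κ) : 0 ≤ (A.fst + t • A.snd) k :=
  add_nonneg (A.fst_nonneg k) (mul_nonneg ht.le (A.snd_nonneg k))

lemma weight_pos (ht : 0 < t) {k : κ} (hk : A.snd k ≠ 0) : 0 < (A.fst + t • A.snd) k :=
  add_pos_of_nonneg_of_pos (A.fst_nonneg k) (mul_pos ht ((A.snd_nonneg k).lt_of_ne' hk))

lemma resolvent_of_snd_ne_zero {k : κ} (hk : A.snd k ≠ 0) :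
    A.resolvent t k = A.vec k * (((A.fst k / A.snd k + t)⁻¹ : ℝ) : ℂ) := by
  rw [resolvent, ← inv_div, add_div, mul_div_cancel_right₀ _ hk]

variable [Fintype κ] [Fintype κ']

/-- The perturbed relative entropy `⟨vec, fst · (log (fst + t • snd) - log snd) vec⟩`; at `t = 0`
it is the relative entropy of the pair. -/
def logPotential (A : SpectralPair κ) (t : ℝ) : ℝ :=
  ∑ k, ‖A.vec k‖ ^ 2 * A.fst k * (Real.log (A.fst k + t * A.snd k) - Real.log (A.snd k))

/-- The squared norm of `resolvent t` for the weight `fst + t • snd`. -/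
def resolventSum (A : SpectralPair κ) (t : ℝ) : ℝ :=
  ∑ k, (A.fst + t • A.snd) k * ‖A.resolvent t k‖ ^ 2

lemma wInner_resolvent (ht : 0 < t) (y : κ → ℂ) :
    ⟪A.resolvent t, y⟫_[ℂ, A.fst + t • A.snd] = ⟪A.vec, y⟫_[ℂ, A.snd] := by
  refine Finset.sum_congr rfl fun k _ => ?_
  by_cases hk : A.snd k = 0
  · simp [resolvent, hk]
  · have hne : (A.fst k + t * A.snd k) ≠ 0 := (weight_pos ht hk).ne'
    have hcancel : ((A.fst k + t * A.snd k : ℝ) : ℂ) * ((A.snd k / (A.fst k + t * A.snd k) : ℝ) : ℂ)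
        = (A.snd k : ℂ) := by
      rw [← Complex.ofReal_mul, mul_div_cancel₀ _ hne]
    simp only [resolvent, Pi.add_apply, Pi.smul_apply, smul_eq_mul, Complex.real_smul,
      RCLike.inner_apply, map_mul, Complex.conj_ofReal]
    linear_combination (y k * (starRingEnd ℂ) (A.vec k)) * hcancel

lemma continuousOn_logPotential : ContinuousOn A.logPotential (Set.Ici 0) := by
  refine continuousOn_finsetSum _ fun k _ => ?_
  rcases (A.fst_nonneg k).eq_or_lt with h | h
  · simp only [← h, mul_zero, zero_mul]
    exact continuousOn_const
  · refine continuousOn_const.mul (.sub (.log (by fun_prop) fun t ht => ?_) continuousOn_const)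
    exact (add_pos_of_pos_of_nonneg h (mul_nonneg ht (A.snd_nonneg k))).ne'

lemma hasDerivAt_logPotential (ht : 0 < t) :
    HasDerivAt A.logPotential (∑ k, A.snd k * ‖A.vec k‖ ^ 2 - t * A.resolventSum t) t := by
  have hsum : ∑ k, A.snd k * ‖A.vec k‖ ^ 2 - t * A.resolventSum t
      = ∑ k, ‖A.vec k‖ ^ 2 * A.fst k * (A.snd k / (A.fst k + t * A.snd k)) := by
    rw [resolventSum, Finset.mul_sum, ← Finset.sum_sub_distrib]
    refine Finset.sum_congr rfl fun k _ => ?_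
    by_cases hk : A.snd k = 0
    · simp [resolvent, hk]
    · have hcancel : A.snd k / (A.fst k + t * A.snd k) * (A.fst k + t * A.snd k) = A.snd k :=
        div_mul_cancel₀ _ (weight_pos ht hk).ne'
      simp only [resolvent, Pi.add_apply, Pi.smul_apply, smul_eq_mul, norm_mul, Complex.norm_real,
        mul_pow, Real.norm_eq_abs, sq_abs]
      linear_combination
        -‖A.vec k‖ ^ 2 * (1 + t * (A.snd k / (A.fst k + t * A.snd k))) * hcancel
  rw [hsum]
  refine HasDerivAt.fun_sum fun k _ => ?_
  rcases (A.fst_nonneg k).eq_or_lt with h | h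
  · simpa [← h] using hasDerivAt_const t (0 : ℝ)
  · have hne : A.fst k + t * A.snd k ≠ 0 :=
      (add_pos_of_pos_of_nonneg h (mul_nonneg ht.le (A.snd_nonneg k))).ne'
    have hlinear : HasDerivAt (fun t => A.fst k + t * A.snd k) (A.snd k) t := by
      simpa using ((hasDerivAt_id t).mul_const (A.snd k)).const_add (A.fst k)
    exact ((hlinear.log hne).sub_const _).const_mul _

lemma tendsto_logPotential_sub_log (A : SpectralPair κ) :
    Filter.Tendsto (fun t => A.logPotential t - (∑ k, A.fst k * ‖A.vec k‖ ^ 2) * Real.log t)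
      Filter.atTop (nhds 0) := by
  have hterm : ∀ k, Filter.Tendsto
      (fun t => ‖A.vec k‖ ^ 2 * A.fst k * (Real.log (A.fst k + t * A.snd k) - Real.log (A.snd k))
        - A.fst k * ‖A.vec k‖ ^ 2 * Real.log t) Filter.atTop (nhds 0) := by
    intro k
    rcases (A.snd_nonneg k).eq_or_lt with h | h
    · rcases A.vec_eq_zero_or_fst_eq_zero k h.symm with h0 | h0 <;> simp [h0]
    · have hratio : Filter.Tendsto (fun t : ℝ => A.fst k / A.snd k * t⁻¹ + 1) Filter.atTop
          (nhds 1) := by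
        simpa using (tendsto_inv_atTop_zero.const_mul (A.fst k / A.snd k)).add_const 1
      have hlog : Filter.Tendsto
          (fun t : ℝ => ‖A.vec k‖ ^ 2 * A.fst k * Real.log (A.fst k / A.snd k * t⁻¹ + 1))
          Filter.atTop (nhds 0) := by
        simpa using (hratio.log one_ne_zero).const_mul (‖A.vec k‖ ^ 2 * A.fst k)
      refine hlog.congr' ?_
      filter_upwards [Filter.eventually_gt_atTop 0] with t ht
      have hpos : 0 < A.fst k / A.snd k * t⁻¹ + 1 := by
        have := A.fst_nonneg k
        positivity
      have hfactor : A.fst k + t * A.snd k = (A.fst k / A.snd k * t⁻¹ + 1) * (A.snd k * t) := by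
        field_simp
      rw [hfactor, Real.log_mul hpos.ne' (mul_pos h ht).ne', Real.log_mul h.ne' ht.ne']
      ring
  simpa [logPotential, Finset.sum_sub_distrib, Finset.sum_mul]
    using tendsto_finsetSum Finset.univ fun k _ => hterm k

/-- Linear maps carrying one vector to the other and preserving both weighted inner products. -/
structure IsEmbedding (A : SpectralPair κ) (A' : SpectralPair κ')
    (J : (κ' → ℂ) →ₗ[ℂ] (κ → ℂ)) : Prop where
  map_vec : J A'.vec = A.vec
  wInner_fst : ∀ y z, ⟪J y, J z⟫_[ℂ, A.fst] = ⟪y, z⟫_[ℂ, A'.fst]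
  wInner_snd : ∀ y z, ⟪J y, J z⟫_[ℂ, A.snd] = ⟪y, z⟫_[ℂ, A'.snd]

namespace IsEmbedding

variable {J : (κ' → ℂ) →ₗ[ℂ] (κ → ℂ)}

lemma sum_fst_eq (hJ : IsEmbedding A A' J) :
    ∑ k, A.fst k * ‖A.vec k‖ ^ 2 = ∑ l, A'.fst l * ‖A'.vec l‖ ^ 2 := by
  have := hJ.wInner_fst A'.vec A'.vec
  rwa [hJ.map_vec, wInner_self_eq_sum, wInner_self_eq_sum, Complex.ofReal_inj] at this

lemma sum_snd_eq (hJ : IsEmbedding A A' J) :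
    ∑ k, A.snd k * ‖A.vec k‖ ^ 2 = ∑ l, A'.snd l * ‖A'.vec l‖ ^ 2 := by
  have := hJ.wInner_snd A'.vec A'.vec
  rwa [hJ.map_vec, wInner_self_eq_sum, wInner_self_eq_sum, Complex.ofReal_inj] at this

lemma apply_congr (hJ : IsEmbedding A A' J) {y z : κ' → ℂ}
    (h : ∀ l, A'.snd l ≠ 0 → y l = z l) {k : κ} (hk : A.snd k ≠ 0) : J y k = J z k := by
  refine sub_eq_zero.1 (?_ : (J y - J z) k = 0)
  rw [← map_sub]
  refine eq_zero_of_wInner_self_eq_zero A.snd_nonneg ?_ hk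
  rw [hJ.wInner_snd, wInner_self_eq_sum, Complex.ofReal_eq_zero]
  refine Finset.sum_eq_zero fun l _ => ?_
  by_cases hl : A'.snd l = 0
  · simp [hl]
  · simp [h l hl]

/-- The image of the second resolvent is the orthogonal projection of the first one onto the range
of `J`, so this is the theorem of Pythagoras. -/
lemma wInner_resolvent_sub (hJ : IsEmbedding A A' J) (ht : 0 < t) :
    ⟪A.resolvent t - J (A'.resolvent t), A.resolvent t - J (A'.resolvent t)⟫_[ℂ,
      A.fst + t • A.snd] = ((A.resolventSum t - A'.resolventSum t : ℝ) : ℂ) := by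
  have hweight : ∀ y z, ⟪J y, J z⟫_[ℂ, A.fst + t • A.snd] = ⟪y, z⟫_[ℂ, A'.fst + t • A'.snd] := by
    intro y z
    rw [wInner_add_smul_weight, wInner_add_smul_weight, hJ.wInner_fst, hJ.wInner_snd]
  have hcross : ⟪A.resolvent t, J (A'.resolvent t)⟫_[ℂ, A.fst + t • A.snd]
      = ⟪A'.resolvent t, A'.resolvent t⟫_[ℂ, A'.fst + t • A'.snd] := by
    rw [wInner_resolvent ht, wInner_resolvent ht, ← hJ.map_vec, hJ.wInner_snd]
  have hcross' := congrArg (starRingEnd ℂ) hcross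
  rw [conj_wInner_symm, conj_wInner_symm] at hcross'
  rw [wInner_sub_left, wInner_sub_right, wInner_sub_right, hweight, hcross, hcross', sub_self,
    sub_zero, wInner_self_eq_sum, wInner_self_eq_sum, ← Complex.ofReal_sub]
  rfl

lemma resolventSum_le (hJ : IsEmbedding A A' J) (ht : 0 < t) :
    A'.resolventSum t ≤ A.resolventSum t := by
  have h := hJ.wInner_resolvent_sub ht
  rw [wInner_self_eq_sum, Complex.ofReal_inj] at h
  rw [← sub_nonneg, ← h]
  exact Finset.sum_nonneg fun k _ => mul_nonneg (weight_nonneg ht k) (sq_nonneg _)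

lemma logPotential_eq (hJ : IsEmbedding A A' J) (h0 : A.logPotential 0 = A'.logPotential 0)
    (ht : 0 ≤ t) : A.logPotential t = A'.logPotential t := by
  let G : ℝ → ℝ := fun t => A'.logPotential t - A.logPotential t
  have hderiv : ∀ x, 0 < x → HasDerivAt G (x * (A.resolventSum x - A'.resolventSum x)) x := by
    intro x hx
    refine ((hasDerivAt_logPotential hx).sub (hasDerivAt_logPotential hx)).congr_deriv ?_
    rw [hJ.sum_snd_eq]
    ring
  have hmono : MonotoneOn G (Set.Ici 0) := by
    refine monotoneOn_of_deriv_nonneg (convex_Ici 0)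
      (continuousOn_logPotential.sub continuousOn_logPotential)
      (fun x hx => ?_) fun x hx => ?_ <;> rw [interior_Ici] at hx
    · exact (hderiv x hx).differentiableAt.differentiableWithinAt
    · rw [(hderiv x hx).deriv]
      exact mul_nonneg hx.le (sub_nonneg.2 (hJ.resolventSum_le hx))
  have hlim : Filter.Tendsto G Filter.atTop (nhds 0) := by
    simpa [hJ.sum_fst_eq] using A'.tendsto_logPotential_sub_log.sub A.tendsto_logPotential_sub_log
  have hnonpos : G t ≤ 0 := by
    refine ge_of_tendsto hlim ?_
    filter_upwards [Filter.eventually_ge_atTop t] with x hx using hmono ht (ht.trans hx) hx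
  have hnonneg : G 0 ≤ G t := hmono Set.self_mem_Ici ht ht
  simp only [G] at hnonpos hnonneg
  linarith

lemma resolventSum_eq (hJ : IsEmbedding A A' J) (h0 : A.logPotential 0 = A'.logPotential 0)
    (ht : 0 < t) : A.resolventSum t = A'.resolventSum t := by
  have heq : A.logPotential =ᶠ[nhds t] A'.logPotential := by
    filter_upwards [Ioi_mem_nhds ht] with x hx using hJ.logPotential_eq h0 hx.le
  have := ((hasDerivAt_logPotential (A := A) ht).congr_of_eventuallyEq heq.symm).unique
    (hasDerivAt_logPotential ht)
  rw [hJ.sum_snd_eq, sub_right_inj] at this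
  exact mul_left_cancel₀ ht.ne' this

lemma apply_resolvent (hJ : IsEmbedding A A' J) (h0 : A.logPotential 0 = A'.logPotential 0)
    (ht : 0 < t) {k : κ} (hk : A.snd k ≠ 0) : J (A'.resolvent t) k = A.resolvent t k := by
  have hzero := hJ.wInner_resolvent_sub ht
  rw [hJ.resolventSum_eq h0 ht, sub_self, Complex.ofReal_zero] at hzero
  exact (sub_eq_zero.1 (eq_zero_of_wInner_self_eq_zero (weight_nonneg ht) hzero
    (weight_pos ht hk).ne')).symm

theorem apply_vec_mul_ratio (hJ : IsEmbedding A A' J)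
    (h0 : A.logPotential 0 = A'.logPotential 0) (f : ℝ → ℝ) {k : κ} (hk : A.snd k ≠ 0) :
    J (fun l => A'.vec l * f (A'.fst l / A'.snd l)) k = A.vec k * f (A.fst k / A.snd k) := by
  classical
  let X := Finset.univ.image (fun k => A.fst k / A.snd k) ∪
    Finset.univ.image fun l => A'.fst l / A'.snd l
  have hX : ∀ x ∈ X, 0 ≤ x := by
    simp only [X, Finset.mem_union, Finset.mem_image, Finset.mem_univ, true_and]
    rintro x (⟨k, rfl⟩ | ⟨l, rfl⟩)
    · exact div_nonneg (A.fst_nonneg k) (A.snd_nonneg k)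
    · exact div_nonneg (A'.fst_nonneg l) (A'.snd_nonneg l)
  obtain ⟨a, ha⟩ := exists_forall_mem_eq_sum_mul_inv X (fun y => -(y + 1))
    (fun _ _ _ _ h => by simpa using h) (fun x hx y hy => by linarith [hX x hx, hX y hy]) f
  simp only [sub_neg_eq_add] at ha
  have hvec : ∀ l, A'.snd l ≠ 0 → A'.vec l * f (A'.fst l / A'.snd l)
      = (∑ y ∈ X, (a y : ℂ) • A'.resolvent (y + 1)) l := by
    intro l hl
    rw [ha _ (by simp [X])]
    simp [resolvent_of_snd_ne_zero hl, Finset.mul_sum, mul_left_comm]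
  rw [hJ.apply_congr hvec hk, map_sum, Finset.sum_apply, ha (A.fst k / A.snd k) (by simp [X]),
    Complex.ofReal_sum, Finset.mul_sum]
  refine Finset.sum_congr rfl fun y hy => ?_
  have hy : 0 < y + 1 := by linarith [hX y hy]
  rw [map_smul, Pi.smul_apply, hJ.apply_resolvent h0 hy hk, resolvent_of_snd_ne_zero hk,
    Complex.ofReal_mul, smul_eq_mul, mul_left_comm]

end IsEmbedding

end SpectralPair

section FunctionalCalculus

variable {m n : Type*} [Fintype m] [DecidableEq m] [Fintype n] [DecidableEq n]
  {A : Matrix n n ℂ}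

lemma continuousOn_spectrum (f : ℝ → ℝ) (A : Matrix n n ℂ) : ContinuousOn f (spectrum ℝ A) :=
  A.finite_real_spectrum.continuousOn f

lemma cfc_mul_cfc (f g : ℝ → ℝ) (A : Matrix n n ℂ) :
    cfc f A * cfc g A = cfc (fun x => f x * g x) A :=
  (cfc_mul f g A (continuousOn_spectrum f A) (continuousOn_spectrum g A)).symm

lemma conjTranspose_cfc (f : ℝ → ℝ) (A : Matrix n n ℂ) : (cfc f A)ᴴ = cfc f A :=
  cfc_predicate f A

lemma cfc_congr_of_posSemidef (hA : A.PosSemidef) {f g : ℝ → ℝ} (h : ∀ x, 0 ≤ x → f x = g x) :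
    cfc f A = cfc g A := by
  refine cfc_congr fun x hx => h x ?_
  obtain ⟨i, rfl⟩ := hA.1.spectrum_real_eq_range_eigenvalues ▸ hx
  exact hA.eigenvalues_nonneg i

lemma cfc_eq_conj_diagonal (hA : A.IsHermitian) (f : ℝ → ℝ) :
    cfc f A = (hA.eigenvectorUnitary : Matrix n n ℂ) *
      diagonal (fun i => (f (hA.eigenvalues i) : ℂ)) *
        star (hA.eigenvectorUnitary : Matrix n n ℂ) := by
  rw [hA.cfc_eq]
  rfl

lemma trace_cfc (hA : A.IsHermitian) (f : ℝ → ℝ) :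
    (cfc f A).trace = ∑ i, (f (hA.eigenvalues i) : ℂ) := by
  rw [cfc_eq_conj_diagonal hA, trace_mul_comm, ← Matrix.mul_assoc, Unitary.coe_star_mul_self,
    Matrix.one_mul, trace_diagonal]

lemma map_conjTranspose (ι : Matrix m m ℂ →⋆ₐ[ℂ] Matrix n n ℂ) (X : Matrix m m ℂ) :
    ι Xᴴ = (ι X)ᴴ :=
  map_star ι X

lemma map_cfc_of_isHermitian (ι : Matrix m m ℂ →⋆ₐ[ℂ] Matrix n n ℂ) (f : ℝ → ℝ)
    {A : Matrix m m ℂ} (hA : A.IsHermitian) : ι (cfc f A) = cfc f (ι A) :=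
  ι.map_cfc f A (continuousOn_spectrum f A)
    (LinearMap.continuous_of_finiteDimensional ι.toAlgHom.toLinearMap) hA (IsSelfAdjoint.map hA ι)

/-- The orthogonal projection onto the kernel of a Hermitian matrix. -/
def kerProj (A : Matrix n n ℂ) : Matrix n n ℂ := cfc (fun x : ℝ => if x = 0 then 1 else 0) A

/-- The inverse square root of a positive semidefinite matrix on its support, extended by zero
to its kernel. -/
def invSqrt (A : Matrix n n ℂ) : Matrix n n ℂ := cfc (fun x : ℝ => (√x)⁻¹) A

lemma conjTranspose_kerProj (A : Matrix n n ℂ) : (kerProj A)ᴴ = kerProj A :=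
  conjTranspose_cfc _ A

lemma conjTranspose_invSqrt (A : Matrix n n ℂ) : (invSqrt A)ᴴ = invSqrt A :=
  conjTranspose_cfc _ A

lemma kerProj_mul_self (A : Matrix n n ℂ) : kerProj A * kerProj A = kerProj A := by
  rw [kerProj, cfc_mul_cfc]
  congr! 2 with x
  split_ifs <;> simp

lemma posSemidef_kerProj (A : Matrix n n ℂ) : (kerProj A).PosSemidef := by
  rw [← kerProj_mul_self]
  nth_rw 1 [← conjTranspose_kerProj]
  exact posSemidef_conjTranspose_mul_self _

lemma mul_kerProj (hA : A.IsHermitian) : A * kerProj A = 0 := by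
  nth_rw 1 [← cfc_id' ℝ A hA.isSelfAdjoint]
  rw [kerProj, cfc_mul_cfc, ← cfc_zero ℝ (a := A)]
  congr! 2 with x
  simp

lemma cfc_sqrt_mul_self (hA : A.PosSemidef) : cfc Real.sqrt A * cfc Real.sqrt A = A := by
  rw [cfc_mul_cfc, cfc_congr_of_posSemidef hA fun x hx => Real.mul_self_sqrt hx,
    cfc_id' ℝ A hA.1.isSelfAdjoint]

lemma invSqrt_mul_mul_invSqrt (hA : A.PosSemidef) :
    invSqrt A * A * invSqrt A = 1 - kerProj A := by
  rw [eq_sub_iff_add_eq, ← cfc_const_one ℝ A hA.1.isSelfAdjoint]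
  nth_rw 2 [← cfc_id' ℝ A hA.1.isSelfAdjoint]
  rw [invSqrt, kerProj, cfc_mul_cfc, cfc_mul_cfc,
    ← cfc_add A _ _ (continuousOn_spectrum _ A) (continuousOn_spectrum _ A)]
  refine cfc_congr_of_posSemidef hA fun x hx => ?_
  rcases hx.eq_or_lt with rfl | hx
  · simp
  · rw [if_neg hx.ne', add_zero, mul_right_comm, ← mul_inv, Real.mul_self_sqrt hx.le,
      inv_mul_cancel₀ hx.ne']

end FunctionalCalculus

lemma mul_eq_zero_of_trace_mul_eq_zero {n : Type*} [Fintype n] {A B : Matrix n n ℂ}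
    (hA : A.PosSemidef) (hB : B.PosSemidef) (h : (A * B).trace = 0) : A * B = 0 := by
  classical
  have hsqrt : cfc Real.sqrt A * cfc Real.sqrt B = 0 := by
    rw [← trace_conjTranspose_mul_self_eq_zero_iff, conjTranspose_mul, conjTranspose_cfc,
      conjTranspose_cfc, Matrix.mul_assoc, trace_mul_comm, Matrix.mul_assoc, Matrix.mul_assoc,
      cfc_sqrt_mul_self hB, ← Matrix.mul_assoc, cfc_sqrt_mul_self hA, h]
  rw [← cfc_sqrt_mul_self hA, ← cfc_sqrt_mul_self hB, Matrix.mul_assoc (cfc _ A),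
    ← Matrix.mul_assoc (cfc _ A) (cfc _ B), hsqrt, Matrix.zero_mul, Matrix.mul_zero]

section SpectralCoords

variable {n : Type*} [Fintype n] [DecidableEq n] {ρ σ : Matrix n n ℂ}

/-- The matrix entries of an operator with respect to the eigenbases of two Hermitian matrices:
its coordinates in a joint eigenbasis of left multiplication by `ρ` and right multiplication by
`σ`. -/
def spectralCoords (hρ : ρ.IsHermitian) (hσ : σ.IsHermitian) :
    Matrix n n ℂ ≃ₗ[ℂ] (n × n → ℂ) where
  toFun X k := (star (hρ.eigenvectorUnitary : Matrix n n ℂ) * X *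
    (hσ.eigenvectorUnitary : Matrix n n ℂ)) k.1 k.2
  map_add' X Y := by simp only [Matrix.mul_add, Matrix.add_mul]; rfl
  map_smul' c X := by simp only [Matrix.mul_smul, Matrix.smul_mul]; rfl
  invFun x := (hρ.eigenvectorUnitary : Matrix n n ℂ) * Matrix.of (fun i j => x (i, j)) *
    star (hσ.eigenvectorUnitary : Matrix n n ℂ)
  left_inv X := by
    change _ * (star _ * X * _) * star _ = X
    rw [← Matrix.mul_assoc, ← Matrix.mul_assoc,
      Unitary.mul_star_self_of_mem hρ.eigenvectorUnitary.2, Matrix.one_mul, Matrix.mul_assoc,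
      Unitary.mul_star_self_of_mem hσ.eigenvectorUnitary.2, Matrix.mul_one]
  right_inv x := by
    ext ⟨i, j⟩
    simp only [← Matrix.mul_assoc, Unitary.coe_star_mul_self, Matrix.one_mul]
    rw [Matrix.mul_assoc, Unitary.coe_star_mul_self, Matrix.mul_one, Matrix.of_apply]

variable (hρ : ρ.IsHermitian) (hσ : σ.IsHermitian)

lemma spectralCoords_cfc_mul_mul_cfc (f g : ℝ → ℝ) (X : Matrix n n ℂ) (k : n × n) :
    spectralCoords hρ hσ (cfc f ρ * X * cfc g σ) k
      = ((f (hρ.eigenvalues k.1) * g (hσ.eigenvalues k.2) : ℝ) : ℂ) * spectralCoords hρ hσ X k := by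
  have hdiag : star (hρ.eigenvectorUnitary : Matrix n n ℂ) * (cfc f ρ * X * cfc g σ)
        * (hσ.eigenvectorUnitary : Matrix n n ℂ)
      = diagonal (fun i => (f (hρ.eigenvalues i) : ℂ)) *
        (star (hρ.eigenvectorUnitary : Matrix n n ℂ) * X *
          (hσ.eigenvectorUnitary : Matrix n n ℂ)) *
        diagonal (fun i => (g (hσ.eigenvalues i) : ℂ)) := by
    rw [cfc_eq_conj_diagonal hρ, cfc_eq_conj_diagonal hσ]
    simp only [← Matrix.mul_assoc, Unitary.coe_star_mul_self, Matrix.one_mul]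
    rw [Matrix.mul_assoc _ (star _), Unitary.coe_star_mul_self, Matrix.mul_one]
  refine (congrFun₂ hdiag k.1 k.2).trans ?_
  rw [mul_diagonal, diagonal_mul, Complex.ofReal_mul, mul_right_comm]
  rfl

lemma wInner_one_spectralCoords (X Y : Matrix n n ℂ) :
    ⟪spectralCoords hρ hσ X, spectralCoords hρ hσ Y⟫_[ℂ] = (Xᴴ * Y).trace := by
  let U := (hρ.eigenvectorUnitary : Matrix n n ℂ)
  let V := (hσ.eigenvectorUnitary : Matrix n n ℂ)
  calc ⟪spectralCoords hρ hσ X, spectralCoords hρ hσ Y⟫_[ℂ]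
      = ((star U * X * V)ᴴ * (star U * Y * V)).trace := by
        rw [wInner_one_eq_sum, Fintype.sum_prod_type_right]
        simp only [trace, diag_apply, Matrix.mul_apply (M := (star U * X * V)ᴴ),
          conjTranspose_apply, RCLike.inner_apply']
        rfl
    _ = (star V * Xᴴ * (U * star U) * Y * V).trace := by
        simp only [conjTranspose_mul, star_eq_conjTranspose, conjTranspose_conjTranspose,
          Matrix.mul_assoc]
    _ = (Xᴴ * Y * (V * star V)).trace := by
        rw [Unitary.mul_star_self_of_mem hρ.eigenvectorUnitary.2, Matrix.mul_one,
          Matrix.mul_assoc, Matrix.mul_assoc, trace_mul_comm]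
        simp only [Matrix.mul_assoc]
    _ = (Xᴴ * Y).trace := by
        rw [Unitary.mul_star_self_of_mem hσ.eigenvectorUnitary.2, Matrix.mul_one]

lemma wInner_spectralCoords (f g : ℝ → ℝ) (X Y : Matrix n n ℂ) :
    ⟪spectralCoords hρ hσ X, spectralCoords hρ hσ Y⟫_[ℂ,
        fun k => f (hρ.eigenvalues k.1) * g (hσ.eigenvalues k.2)]
      = (Xᴴ * (cfc f ρ * Y * cfc g σ)).trace := by
  rw [← wInner_one_spectralCoords hρ hσ, wInner_one_eq_sum]
  refine Finset.sum_congr rfl fun k _ => ?_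
  rw [spectralCoords_cfc_mul_mul_cfc, ← Complex.real_smul, inner_smul_right_eq_smul]

end SpectralCoords

/-- The relative entropy `Tr[ρ (log ρ - log σ)]`. Since `Real.log 0 = 0`, this is the usual
quantity only when the support of `ρ` is contained in that of `σ`. -/
def relEntropy {n : Type*} [Fintype n] [DecidableEq n] (ρ σ : Matrix n n ℂ) : ℝ :=
  (ρ * (cfc Real.log ρ - cfc Real.log σ)).trace.re

/-- Two positive semidefinite matrices such that the support of `ρ` is contained in that of `σ`. -/
structure SupportLE {n : Type*} [Fintype n] [DecidableEq n] (ρ σ : Matrix n n ℂ) : Prop where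
  left : ρ.PosSemidef
  right : σ.PosSemidef
  mul_kerProj : ρ * kerProj σ = 0

namespace SupportLE

variable {n : Type*} [Fintype n] [DecidableEq n] {ρ σ : Matrix n n ℂ}

/-- The joint spectral data of left multiplication by `ρ` and right multiplication by `σ`, with
the identity operator as the vector. -/
def spectralPair (h : SupportLE ρ σ) : SpectralPair (n × n) where
  fst k := h.left.1.eigenvalues k.1
  snd k := h.right.1.eigenvalues k.2
  vec := spectralCoords h.left.1 h.right.1 1
  fst_nonneg k := h.left.eigenvalues_nonneg k.1
  snd_nonneg k := h.right.eigenvalues_nonneg k.2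
  vec_eq_zero_or_fst_eq_zero k hk := by
    have := spectralCoords_cfc_mul_mul_cfc h.left.1 h.right.1 (fun x => x)
      (fun x => if x = 0 then 1 else 0) 1 k
    rw [cfc_id' ℝ ρ h.left.1.isSelfAdjoint, Matrix.mul_one, ← kerProj, h.mul_kerProj,
      map_zero] at this
    simpa [hk, or_comm] using this.symm

lemma wInner_fst_spectralCoords (h : SupportLE ρ σ) (X Y : Matrix n n ℂ) :
    ⟪spectralCoords h.left.1 h.right.1 X, spectralCoords h.left.1 h.right.1 Y⟫_[ℂ,
      h.spectralPair.fst] = (Xᴴ * (ρ * Y)).trace := by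
  have := wInner_spectralCoords h.left.1 h.right.1 (fun x => x) (fun _ => 1) X Y
  simp only [mul_one, cfc_id' ℝ ρ h.left.1.isSelfAdjoint,
    cfc_const_one ℝ σ h.right.1.isSelfAdjoint] at this
  exact this

lemma wInner_snd_spectralCoords (h : SupportLE ρ σ) (X Y : Matrix n n ℂ) :
    ⟪spectralCoords h.left.1 h.right.1 X, spectralCoords h.left.1 h.right.1 Y⟫_[ℂ,
      h.spectralPair.snd] = (Xᴴ * (Y * σ)).trace := by
  have := wInner_spectralCoords h.left.1 h.right.1 (fun _ => 1) (fun x => x) X Y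
  simp only [one_mul, cfc_id' ℝ σ h.right.1.isSelfAdjoint,
    cfc_const_one ℝ ρ h.left.1.isSelfAdjoint] at this
  exact this

lemma logPotential_zero (h : SupportLE ρ σ) :
    h.spectralPair.logPotential 0 = relEntropy ρ σ := by
  have hlogρ := wInner_spectralCoords h.left.1 h.right.1 (fun x => x * Real.log x) (fun _ => 1) 1 1
  have hlogσ := wInner_spectralCoords h.left.1 h.right.1 (fun x => x) Real.log 1 1
  rw [wInner_self_eq_sum, ← cfc_mul_cfc, cfc_const_one ℝ σ h.right.1.isSelfAdjoint] at hlogρ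
  rw [wInner_self_eq_sum] at hlogσ
  rw [relEntropy, Matrix.mul_sub, trace_sub, Complex.sub_re]
  simp only [cfc_id' ℝ ρ h.left.1.isSelfAdjoint, conjTranspose_one, Matrix.one_mul,
    Matrix.mul_one] at hlogρ hlogσ
  rw [← hlogρ, ← hlogσ, Complex.ofReal_re, Complex.ofReal_re, ← Finset.sum_sub_distrib]
  refine Finset.sum_congr rfl fun k _ => ?_
  rw [zero_mul, add_zero, spectralPair]
  ring

lemma spectralCoords_sqrt_mul_invSqrt (h : SupportLE ρ σ) :
    spectralCoords h.left.1 h.right.1 (cfc Real.sqrt ρ * invSqrt σ)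
      = fun k => h.spectralPair.vec k * √(h.spectralPair.fst k / h.spectralPair.snd k) := by
  ext k
  rw [← Matrix.mul_one (cfc Real.sqrt ρ), invSqrt, spectralCoords_cfc_mul_mul_cfc,
    ← div_eq_mul_inv, ← Real.sqrt_div (h.left.eigenvalues_nonneg k.1), mul_comm]
  rfl

variable {m : Type*} [Fintype m] [DecidableEq m] {ρ' σ' : Matrix m m ℂ}
  {ι : Matrix m m ℂ →⋆ₐ[ℂ] Matrix n n ℂ}

lemma isEmbedding (h : SupportLE ρ σ) (h' : SupportLE ρ' σ')
    (hρ : ∀ X, (ι X * ρ).trace = (X * ρ').trace) (hσ : ∀ X, (ι X * σ).trace = (X * σ').trace) :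
    h.spectralPair.IsEmbedding h'.spectralPair
      ((spectralCoords h.left.1 h.right.1).toLinearMap ∘ₗ ι.toAlgHom.toLinearMap ∘ₗ
        (spectralCoords h'.left.1 h'.right.1).symm.toLinearMap) where
  map_vec := by
    change spectralCoords _ _ (ι ((spectralCoords _ _).symm (spectralCoords _ _ 1))) = _
    rw [LinearEquiv.symm_apply_apply, map_one]
    rfl
  wInner_fst y z := by
    obtain ⟨X, rfl⟩ := (spectralCoords h'.left.1 h'.right.1).surjective y
    obtain ⟨Y, rfl⟩ := (spectralCoords h'.left.1 h'.right.1).surjective z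
    have hcyc : ((ι X)ᴴ * (ρ * ι Y)).trace = (ι (Y * Xᴴ) * ρ).trace := by
      rw [map_mul, map_conjTranspose, ← Matrix.mul_assoc, trace_mul_comm, ← Matrix.mul_assoc]
    simp only [LinearMap.comp_apply, LinearEquiv.coe_coe, LinearEquiv.symm_apply_apply,
      wInner_fst_spectralCoords]
    refine hcyc.trans ?_
    rw [hρ, Matrix.mul_assoc, trace_mul_comm, Matrix.mul_assoc]
  wInner_snd y z := by
    obtain ⟨X, rfl⟩ := (spectralCoords h'.left.1 h'.right.1).surjective y
    obtain ⟨Y, rfl⟩ := (spectralCoords h'.left.1 h'.right.1).surjective z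
    have hmul : (ι X)ᴴ * (ι Y * σ) = ι (Xᴴ * Y) * σ := by
      rw [map_mul, map_conjTranspose, Matrix.mul_assoc]
    simp only [LinearMap.comp_apply, LinearEquiv.coe_coe, LinearEquiv.symm_apply_apply,
      wInner_snd_spectralCoords]
    refine (congrArg trace hmul).trans ?_
    rw [hσ, Matrix.mul_assoc]

lemma map_sqrt_mul_invSqrt_mul_sqrt (h : SupportLE ρ σ) (h' : SupportLE ρ' σ')
    (hρ : ∀ X, (ι X * ρ).trace = (X * ρ').trace) (hσ : ∀ X, (ι X * σ).trace = (X * σ').trace)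
    (hent : relEntropy ρ σ = relEntropy ρ' σ') :
    ι (cfc Real.sqrt ρ' * invSqrt σ') * cfc Real.sqrt σ = cfc Real.sqrt ρ := by
  refine (spectralCoords h.left.1 h.right.1).injective (funext fun k => ?_)
  have hleft := spectralCoords_cfc_mul_mul_cfc h.left.1 h.right.1 (fun _ => 1) Real.sqrt
    (ι (cfc Real.sqrt ρ' * invSqrt σ')) k
  have hright := spectralCoords_cfc_mul_mul_cfc h.left.1 h.right.1 Real.sqrt (fun _ => 1) 1 k
  rw [cfc_const_one ℝ ρ h.left.1.isSelfAdjoint, Matrix.one_mul, one_mul] at hleft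
  rw [cfc_const_one ℝ σ h.right.1.isSelfAdjoint, Matrix.mul_one, Matrix.mul_one, mul_one] at hright
  rw [hleft, hright]
  by_cases hk : h.right.1.eigenvalues k.2 = 0
  · rcases h.spectralPair.vec_eq_zero_or_fst_eq_zero k hk with h0 | h0
    · change spectralCoords h.left.1 h.right.1 1 k = 0 at h0
      simp [hk, h0]
    · change h.left.1.eigenvalues k.1 = 0 at h0
      simp [hk, h0]
  · have hratio : spectralCoords h.left.1 h.right.1 (ι (cfc Real.sqrt ρ' * invSqrt σ')) k
        = spectralCoords h.left.1 h.right.1 1 k *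
          √(h.left.1.eigenvalues k.1 / h.right.1.eigenvalues k.2) := by
      have := (h.isEmbedding h' hρ hσ).apply_vec_mul_ratio
        (by rw [logPotential_zero, logPotential_zero, hent]) Real.sqrt (k := k) hk
      rwa [← spectralCoords_sqrt_mul_invSqrt, LinearMap.comp_apply, LinearMap.comp_apply,
        LinearEquiv.coe_coe, LinearEquiv.coe_coe, LinearEquiv.symm_apply_apply] at this
    have hne : √(h.right.1.eigenvalues k.2) ≠ 0 :=
      (Real.sqrt_ne_zero (h.right.eigenvalues_nonneg k.2)).2 hk
    rw [hratio, mul_left_comm, mul_comm (Complex.ofReal _), ← Complex.ofReal_mul,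
      Real.sqrt_div (h.left.eigenvalues_nonneg k.1), div_mul_cancel₀ _ hne, mul_comm]

theorem eq_sqrt_mul_map_mul_sqrt (h : SupportLE ρ σ) (h' : SupportLE ρ' σ')
    (hρ : ∀ X, (ι X * ρ).trace = (X * ρ').trace) (hσ : ∀ X, (ι X * σ).trace = (X * σ').trace)
    (hent : relEntropy ρ σ = relEntropy ρ' σ') :
    ρ = cfc Real.sqrt σ * ι (invSqrt σ' * ρ' * invSqrt σ') * cfc Real.sqrt σ := by
  let W := cfc Real.sqrt ρ' * invSqrt σ'
  have hsqrt : ι W * cfc Real.sqrt σ = cfc Real.sqrt ρ :=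
    h.map_sqrt_mul_invSqrt_mul_sqrt h' hρ hσ hent
  have hW : Wᴴ * W = invSqrt σ' * ρ' * invSqrt σ' := by
    rw [conjTranspose_mul, conjTranspose_cfc, conjTranspose_invSqrt, Matrix.mul_assoc,
      ← Matrix.mul_assoc (cfc _ ρ'), cfc_sqrt_mul_self h'.left, Matrix.mul_assoc]
  calc ρ = (ι W * cfc Real.sqrt σ)ᴴ * (ι W * cfc Real.sqrt σ) := by
        rw [hsqrt, conjTranspose_cfc, cfc_sqrt_mul_self h.left]
    _ = cfc Real.sqrt σ * ι (Wᴴ * W) * cfc Real.sqrt σ := by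
        rw [conjTranspose_mul, conjTranspose_cfc, map_mul ι Wᴴ, map_conjTranspose]
        simp only [Matrix.mul_assoc]
    _ = _ := by rw [hW]

end SupportLE

section PartialTrace

variable {R A B E : Type*}

lemma posSemidef_ptraceLeft [Fintype A] {M : Matrix (A × B) (A × B) ℂ} (hM : M.PosSemidef) :
    (ptraceLeft M).PosSemidef := by
  have hsum : ptraceLeft M = ∑ a, M.submatrix (fun b => (a, b)) fun b => (a, b) := by
    ext b c
    simp [ptraceLeft, Matrix.sum_apply]
  rw [hsum]
  exact posSemidef_sum _ fun a _ => hM.submatrix _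

lemma posSemidef_ptraceRight [Fintype B] {M : Matrix (A × B) (A × B) ℂ} (hM : M.PosSemidef) :
    (ptraceRight M).PosSemidef := by
  have hsum : ptraceRight M = ∑ b, M.submatrix (fun a => (a, b)) fun a => (a, b) := by
    ext a c
    simp [ptraceRight, Matrix.sum_apply]
  rw [hsum]
  exact posSemidef_sum _ fun b _ => hM.submatrix _

lemma ptrace3E_eq_ptraceRight [Fintype E] (M : Matrix (R × A × E) (R × A × E) ℂ) :
    ptrace3E M = ptraceRight (M.submatrix (Equiv.prodAssoc R A E) (Equiv.prodAssoc R A E)) :=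
  rfl

lemma posSemidef_ptrace3E [Fintype E] {M : Matrix (R × A × E) (R × A × E) ℂ}
    (hM : M.PosSemidef) : (ptrace3E M).PosSemidef := by
  rw [ptrace3E_eq_ptraceRight]
  exact posSemidef_ptraceRight (hM.submatrix _)

lemma ptraceLeft_ptrace3E [Fintype R] [Fintype E] (M : Matrix (R × A × E) (R × A × E) ℂ) :
    ptraceLeft (ptrace3E M) = ptraceRight (ptraceLeft M) := by
  ext a b
  exact Finset.sum_comm

lemma ptrace3E_one_kronecker [DecidableEq R] [Fintype E] (M : Matrix (A × E) (A × E) ℂ) :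
    ptrace3E ((1 : Matrix R R ℂ) ⊗ₖ M) = (1 : Matrix R R ℂ) ⊗ₖ ptraceRight M := by
  ext x y
  exact (Finset.mul_sum _ _ ((1 : Matrix R R ℂ) x.1 y.1)).symm

lemma trace_ptraceLeft [Fintype A] [Fintype B] (M : Matrix (A × B) (A × B) ℂ) :
    (ptraceLeft M).trace = M.trace :=
  (Fintype.sum_prod_type_right fun x => M x x).symm

lemma trace_ptraceRight [Fintype A] [Fintype B] (M : Matrix (A × B) (A × B) ℂ) :
    (ptraceRight M).trace = M.trace :=
  (Fintype.sum_prod_type fun x => M x x).symm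

lemma trace_one_kronecker_mul [Fintype A] [DecidableEq A] [Fintype B] (X : Matrix B B ℂ)
    (M : Matrix (A × B) (A × B) ℂ) :
    (((1 : Matrix A A ℂ) ⊗ₖ X) * M).trace = (X * ptraceLeft M).trace := by
  have hptrace : ptraceLeft (((1 : Matrix A A ℂ) ⊗ₖ X) * M) = X * ptraceLeft M := by
    ext b c
    simp only [ptraceLeft, Matrix.of_apply, Matrix.mul_apply, Fintype.sum_prod_type,
      kronecker_apply, Matrix.one_apply, ite_mul, one_mul, zero_mul, Finset.sum_const_zero,
      Finset.sum_ite_irrel, Finset.sum_ite_eq, Finset.mem_univ, if_true, Finset.mul_sum]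
    exact Finset.sum_comm
  rw [← hptrace, trace_ptraceLeft]

lemma trace_kronecker_one_mul [Fintype A] [Fintype B] [DecidableEq B] (X : Matrix A A ℂ)
    (M : Matrix (A × B) (A × B) ℂ) :
    ((X ⊗ₖ (1 : Matrix B B ℂ)) * M).trace = (X * ptraceRight M).trace := by
  have hptrace : ptraceRight ((X ⊗ₖ (1 : Matrix B B ℂ)) * M) = X * ptraceRight M := by
    ext b c
    simp only [ptraceRight, Matrix.of_apply, Matrix.mul_apply, Fintype.sum_prod_type,
      kronecker_apply, Matrix.one_apply, mul_ite, mul_one, mul_zero, ite_mul, zero_mul,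
      Finset.sum_ite_eq, Finset.mem_univ, if_true, Finset.mul_sum]
    exact Finset.sum_comm
  rw [← hptrace, trace_ptraceRight]

end PartialTrace

section Channels

variable {n A B C E : Type*}

/-- The completely positive map `X ↦ K X Kᴴ` with a single Kraus operator `K`. -/
def conjMap [Fintype A] (K : Matrix B A ℂ) : Matrix A A ℂ →ₗ[ℂ] Matrix B B ℂ where
  toFun X := K * X * Kᴴ
  map_add' X Y := by rw [Matrix.mul_add, Matrix.add_mul]
  map_smul' c X := by rw [Matrix.mul_smul, Matrix.smul_mul, RingHom.id_apply]

/-- The partial trace over the second tensor factor as a linear map. -/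
def ptraceRightMap (A B : Type*) [Fintype B] :
    Matrix (A × B) (A × B) ℂ →ₗ[ℂ] Matrix A A ℂ where
  toFun := ptraceRight
  map_add' X Y := by
    ext
    exact Finset.sum_add_distrib
  map_smul' c X := by
    ext
    exact (Finset.mul_sum ..).symm

/-- The ampliation `X ↦ X ⊗ 1`. -/
def tensorOneMap (A E : Type*) [DecidableEq E] :
    Matrix A A ℂ →ₗ[ℂ] Matrix (A × E) (A × E) ℂ where
  toFun X := X ⊗ₖ (1 : Matrix E E ℂ)
  map_add' X Y := add_kronecker X Y 1
  map_smul' c X := smul_kronecker c X 1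

/-- The replacement map `X ↦ Tr[X] τ`. -/
def replaceMap (A : Type*) [Fintype A] (τ : Matrix B B ℂ) :
    Matrix A A ℂ →ₗ[ℂ] Matrix B B ℂ :=
  (traceLinearMap A ℂ ℂ).smulRight τ

lemma idTensor_conjMap [Fintype n] [DecidableEq n] [Fintype A] (K : Matrix B A ℂ)
    (M : Matrix (n × A) (n × A) ℂ) :
    idTensor n (conjMap K) M = ((1 : Matrix n n ℂ) ⊗ₖ K) * M * ((1 : Matrix n n ℂ) ⊗ₖ K)ᴴ := by
  ext x y
  rw [conjTranspose_kronecker, conjTranspose_one]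
  simp [idTensor, conjMap, Matrix.mul_apply, Fintype.sum_prod_type, Matrix.one_apply]

lemma idTensor_tensorOneMap [DecidableEq E] (M : Matrix (n × A) (n × A) ℂ) :
    idTensor n (tensorOneMap A E) M = (M ⊗ₖ (1 : Matrix E E ℂ)).submatrix
      (Equiv.prodAssoc n A E).symm (Equiv.prodAssoc n A E).symm :=
  rfl

lemma idTensor_replaceMap [Fintype A] (τ : Matrix B B ℂ) (M : Matrix (n × A) (n × A) ℂ) :
    idTensor n (replaceMap A τ) M = ptraceRight M ⊗ₖ τ :=
  rfl

section CompletelyPositive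

variable [Fintype A] [Fintype B] [Fintype C]

lemma isCPMap_conjMap (K : Matrix B A ℂ) : IsCPMap (conjMap K) := fun k M hM => by
  rw [idTensor_conjMap]
  exact hM.mul_mul_conjTranspose_same _

lemma isCPMap_ptraceRightMap (A B : Type*) [Fintype A] [Fintype B] :
    IsCPMap (ptraceRightMap A B) :=
  fun _ _ hM => posSemidef_ptrace3E hM

lemma isCPMap_tensorOneMap (A E : Type*) [Fintype A] [Fintype E] [DecidableEq E] :
    IsCPMap (tensorOneMap A E) := fun k M hM => by
  rw [idTensor_tensorOneMap]
  exact (hM.kronecker PosSemidef.one).submatrix _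

lemma isCPMap_replaceMap (A : Type*) [Fintype A] {τ : Matrix B B ℂ} (hτ : τ.PosSemidef) :
    IsCPMap (replaceMap A τ) := fun k M hM => by
  rw [idTensor_replaceMap]
  exact (posSemidef_ptraceRight hM).kronecker hτ

namespace IsCPMap

lemma comp {Ψ : Matrix B B ℂ →ₗ[ℂ] Matrix C C ℂ} {Φ : Matrix A A ℂ →ₗ[ℂ] Matrix B B ℂ}
    (hΨ : IsCPMap Ψ) (hΦ : IsCPMap Φ) : IsCPMap (Ψ ∘ₗ Φ) :=
  fun k M hM => hΨ k _ (hΦ k M hM)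

lemma add {Φ Ψ : Matrix A A ℂ →ₗ[ℂ] Matrix B B ℂ} (hΦ : IsCPMap Φ) (hΨ : IsCPMap Ψ) :
    IsCPMap (Φ + Ψ) :=
  fun k M hM => (hΦ k M hM).add (hΨ k M hM)

end IsCPMap

lemma IsCPTP.comp {Ψ : Matrix B B ℂ →ₗ[ℂ] Matrix C C ℂ} {Φ : Matrix A A ℂ →ₗ[ℂ] Matrix B B ℂ}
    (hΨ : IsCPTP Ψ) (hΦ : IsCPTP Φ) : IsCPTP (Ψ ∘ₗ Φ) :=
  ⟨hΨ.1.comp hΦ.1, fun M => (hΨ.2 (Φ M)).trans (hΦ.2 M)⟩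

lemma isCPTP_conjMap [DecidableEq A] {V : Matrix B A ℂ} (hV : Vᴴ * V = 1) : IsCPTP (conjMap V) :=
  ⟨isCPMap_conjMap V, fun M => by
    change (V * M * Vᴴ).trace = M.trace
    rw [trace_mul_comm, ← Matrix.mul_assoc, hV, Matrix.one_mul]⟩

lemma isCPTP_ptraceRightMap (A B : Type*) [Fintype A] [Fintype B] : IsCPTP (ptraceRightMap A B) :=
  ⟨isCPMap_ptraceRightMap A B, trace_ptraceRight⟩

end CompletelyPositive

end Channels

section StarAlgHom

variable (R A E : Type*) [Fintype R] [DecidableEq R] [Fintype A] [DecidableEq A] [Fintype E]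
  [DecidableEq E]

/-- The embedding `X ↦ 1_R ⊗ X` of operator algebras. -/
def oneTensorHom : Matrix A A ℂ →⋆ₐ[ℂ] Matrix (R × A) (R × A) ℂ where
  toFun X := (1 : Matrix R R ℂ) ⊗ₖ X
  map_one' := one_kronecker_one
  map_mul' X Y := by rw [← mul_kronecker_mul, Matrix.one_mul]
  map_zero' := kronecker_zero 1
  map_add' X Y := kronecker_add 1 X Y
  commutes' c := by
    rw [Algebra.algebraMap_eq_smul_one, kronecker_smul, one_kronecker_one,
      Algebra.algebraMap_eq_smul_one]
  map_star' X := by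
    rw [star_eq_conjTranspose, star_eq_conjTranspose, conjTranspose_kronecker, conjTranspose_one]

/-- The embedding `X ↦ X ⊗ 1_E` of operator algebras, on a tripartite system. -/
def tensorOneHom : Matrix (R × A) (R × A) ℂ →⋆ₐ[ℂ] Matrix (R × A × E) (R × A × E) ℂ where
  toFun X := (X ⊗ₖ (1 : Matrix E E ℂ)).submatrix (Equiv.prodAssoc R A E).symm
    (Equiv.prodAssoc R A E).symm
  map_one' := by rw [one_kronecker_one, submatrix_one_equiv]
  map_mul' X Y := by rw [submatrix_mul_equiv, ← mul_kronecker_mul, Matrix.one_mul]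
  map_zero' := by rw [zero_kronecker, submatrix_zero]; rfl
  map_add' X Y := by rw [add_kronecker, submatrix_add]; rfl
  commutes' c := by
    rw [Algebra.algebraMap_eq_smul_one, smul_kronecker, one_kronecker_one, submatrix_smul,
      Pi.smul_apply, Pi.smul_apply, submatrix_one_equiv, Algebra.algebraMap_eq_smul_one]
  map_star' X := by
    rw [star_eq_conjTranspose, star_eq_conjTranspose, conjTranspose_submatrix,
      conjTranspose_kronecker, conjTranspose_one]

variable {R A E}

lemma trace_tensorOneHom_mul (X : Matrix (R × A) (R × A) ℂ)
    (M : Matrix (R × A × E) (R × A × E) ℂ) :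
    (tensorOneHom R A E X * M).trace = (X * ptrace3E M).trace := by
  let e := Equiv.prodAssoc R A E
  calc (tensorOneHom R A E X * M).trace
      = ((tensorOneHom R A E X * M).submatrix e e).trace :=
        (e.sum_comp fun x => (tensorOneHom R A E X * M) x x).symm
    _ = ((X ⊗ₖ (1 : Matrix E E ℂ)) * M.submatrix e e).trace := by
        rw [← submatrix_mul_equiv _ _ e e e]
        rfl
    _ = (X * ptrace3E M).trace := by rw [trace_kronecker_one_mul, ptrace3E_eq_ptraceRight]

lemma one_kronecker_cfc (f : ℝ → ℝ) {σ : Matrix A A ℂ} (hσ : σ.IsHermitian) :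
    (1 : Matrix R R ℂ) ⊗ₖ cfc f σ = cfc f ((1 : Matrix R R ℂ) ⊗ₖ σ) :=
  map_cfc_of_isHermitian (oneTensorHom R A) f hσ

end StarAlgHom

section Entropy

variable {R A B Q E : Type*} [Fintype R] [DecidableEq R] [Fintype A] [DecidableEq A] [Fintype B]
  [DecidableEq B] [Fintype Q] [DecidableEq Q] [Fintype E] [DecidableEq E]

lemma vnEntropy_eq_neg_trace {ρ : Matrix A A ℂ} (hρ : ρ.IsHermitian) :
    vnEntropy ρ = -(ρ * cfc Real.log ρ).trace.re := by
  nth_rw 2 [← cfc_id' ℝ ρ hρ.isSelfAdjoint]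
  rw [cfc_mul_cfc, trace_cfc hρ, ← Complex.ofReal_sum, Complex.ofReal_re, vnEntropy, dif_pos hρ,
    ← Finset.sum_neg_distrib]
  simp only [Real.negMulLog, neg_mul]

lemma relEntropy_one_kronecker_ptraceLeft {ρ : Matrix (A × B) (A × B) ℂ} (hρ : ρ.PosSemidef) :
    relEntropy ρ ((1 : Matrix A A ℂ) ⊗ₖ ptraceLeft ρ) = vnEntropy (ptraceLeft ρ) - vnEntropy ρ := by
  have hB := (posSemidef_ptraceLeft hρ).1
  rw [relEntropy, Matrix.mul_sub, trace_sub, Complex.sub_re, ← one_kronecker_cfc _ hB,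
    trace_mul_comm ρ (_ ⊗ₖ _), trace_one_kronecker_mul, trace_mul_comm (cfc _ _) (ptraceLeft ρ),
    vnEntropy_eq_neg_trace hρ.1, vnEntropy_eq_neg_trace hB]
  ring

lemma condMutualInfo_eq_relEntropy_sub {ρ : Matrix (R × Q × E) (R × Q × E) ℂ}
    (hρ : ρ.PosSemidef) :
    condMutualInfo ρ = relEntropy ρ ((1 : Matrix R R ℂ) ⊗ₖ ptraceLeft ρ) -
      relEntropy (ptrace3E ρ) ((1 : Matrix R R ℂ) ⊗ₖ ptraceLeft (ptrace3E ρ)) := by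
  rw [relEntropy_one_kronecker_ptraceLeft hρ,
    relEntropy_one_kronecker_ptraceLeft (posSemidef_ptrace3E hρ), condMutualInfo]
  ring

lemma mul_one_kronecker_kerProj_ptraceLeft {ρ : Matrix (A × B) (A × B) ℂ} (hρ : ρ.PosSemidef) :
    ρ * ((1 : Matrix A A ℂ) ⊗ₖ kerProj (ptraceLeft ρ)) = 0 := by
  refine mul_eq_zero_of_trace_mul_eq_zero hρ (PosSemidef.one.kronecker (posSemidef_kerProj _)) ?_
  rw [trace_mul_comm, trace_one_kronecker_mul, trace_mul_comm,
    mul_kerProj (posSemidef_ptraceLeft hρ).1, trace_zero]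

lemma supportLE_one_kronecker_ptraceLeft {ρ : Matrix (A × B) (A × B) ℂ} (hρ : ρ.PosSemidef) :
    SupportLE ρ ((1 : Matrix A A ℂ) ⊗ₖ ptraceLeft ρ) where
  left := hρ
  right := PosSemidef.one.kronecker (posSemidef_ptraceLeft hρ)
  mul_kerProj := by
    rw [kerProj, ← one_kronecker_cfc _ (posSemidef_ptraceLeft hρ).1]
    exact mul_one_kronecker_kerProj_ptraceLeft hρ

end Entropy

section Recovery

variable {R Q E : Type*} [Fintype R] [DecidableEq R] [Fintype Q] [DecidableEq Q] [Fintype E]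
  [DecidableEq E]

/-- The Petz recovery map `X ↦ σ^{1/2} (σ_Q^{-1/2} X σ_Q^{-1/2} ⊗ 1_E) σ^{1/2}` of a state `σ` on
`Q ⊗ E`, completed on the kernel of `σ_Q` by a replacement map so as to preserve the trace. -/
def petzMap (σ : Matrix (Q × E) (Q × E) ℂ) : Matrix Q Q ℂ →ₗ[ℂ] Matrix (Q × E) (Q × E) ℂ :=
  conjMap (cfc Real.sqrt σ) ∘ₗ tensorOneMap Q E ∘ₗ conjMap (invSqrt (ptraceRight σ)) +
    replaceMap Q σ ∘ₗ conjMap (kerProj (ptraceRight σ))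

lemma trace_petzMap {σ : Matrix (Q × E) (Q × E) ℂ} (hσ : IsState σ) (X : Matrix Q Q ℂ) :
    (petzMap σ X).trace = X.trace := by
  let σQ := ptraceRight σ
  have hmain : (cfc Real.sqrt σ * ((invSqrt σQ * X * invSqrt σQ) ⊗ₖ (1 : Matrix E E ℂ)) *
      cfc Real.sqrt σ).trace = (X * (1 - kerProj σQ)).trace := by
    rw [trace_mul_comm, ← Matrix.mul_assoc, cfc_sqrt_mul_self hσ.1, trace_mul_comm,
      trace_kronecker_one_mul, ← invSqrt_mul_mul_invSqrt (posSemidef_ptraceRight hσ.1),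
      Matrix.mul_assoc, Matrix.mul_assoc, trace_mul_comm]
    simp only [Matrix.mul_assoc, σQ]
  have hker : (kerProj σQ * X * kerProj σQ).trace = (X * kerProj σQ).trace := by
    rw [trace_mul_comm, ← Matrix.mul_assoc, kerProj_mul_self, trace_mul_comm]
  calc (petzMap σ X).trace
      = (X * (1 - kerProj σQ)).trace + (kerProj σQ * X * kerProj σQ).trace * σ.trace := by
        rw [← hmain, petzMap, LinearMap.add_apply, trace_add]
        simp [conjMap, tensorOneMap, replaceMap, conjTranspose_cfc, conjTranspose_invSqrt,
          conjTranspose_kerProj, σQ]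
    _ = X.trace := by
        rw [hker, hσ.2, mul_one, ← trace_add, ← Matrix.mul_add, sub_add_cancel, Matrix.mul_one]

lemma isCPTP_petzMap {σ : Matrix (Q × E) (Q × E) ℂ} (hσ : IsState σ) : IsCPTP (petzMap σ) :=
  ⟨((isCPMap_conjMap _).comp ((isCPMap_tensorOneMap Q E).comp (isCPMap_conjMap _))).add
    ((isCPMap_replaceMap Q hσ.1).comp (isCPMap_conjMap _)), trace_petzMap hσ⟩

theorem eq_sqrt_mul_tensorOneHom_mul_sqrt {ρ : Matrix (R × Q × E) (R × Q × E) ℂ}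
    (hρ : ρ.PosSemidef) (hMarkov : condMutualInfo ρ = 0) :
    ρ = ((1 : Matrix R R ℂ) ⊗ₖ cfc Real.sqrt (ptraceLeft ρ)) *
      tensorOneHom R Q E (((1 : Matrix R R ℂ) ⊗ₖ invSqrt (ptraceRight (ptraceLeft ρ))) *
        ptrace3E ρ * ((1 : Matrix R R ℂ) ⊗ₖ invSqrt (ptraceRight (ptraceLeft ρ)))) *
      ((1 : Matrix R R ℂ) ⊗ₖ cfc Real.sqrt (ptraceLeft ρ)) := by
  have hQE := posSemidef_ptraceLeft hρ
  have hQ := posSemidef_ptraceRight hQE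
  have h' := supportLE_one_kronecker_ptraceLeft (posSemidef_ptrace3E hρ)
  have hent := sub_eq_zero.1 ((condMutualInfo_eq_relEntropy_sub hρ).symm.trans hMarkov)
  rw [ptraceLeft_ptrace3E] at h' hent
  rw [invSqrt, one_kronecker_cfc _ hQE.1, one_kronecker_cfc _ hQ.1]
  exact (supportLE_one_kronecker_ptraceLeft hρ).eq_sqrt_mul_map_mul_sqrt h'
    (fun X => trace_tensorOneHom_mul X ρ)
    (fun X => by rw [trace_tensorOneHom_mul, ptrace3E_one_kronecker]) hent

theorem idTensor_petzMap_ptrace3E {ρ : Matrix (R × Q × E) (R × Q × E) ℂ} (hρ : ρ.PosSemidef)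
    (hMarkov : condMutualInfo ρ = 0) :
    idTensor R (petzMap (ptraceLeft ρ)) (ptrace3E ρ) = ρ := by
  let σ := ptraceLeft ρ
  let σQ := ptraceRight σ
  have hker : ptrace3E ρ * ((1 : Matrix R R ℂ) ⊗ₖ kerProj σQ) = 0 := by
    have := mul_one_kronecker_kerProj_ptraceLeft (posSemidef_ptrace3E hρ)
    rwa [ptraceLeft_ptrace3E] at this
  have hcompletion :
      idTensor R (replaceMap Q σ) (idTensor R (conjMap (kerProj σQ)) (ptrace3E ρ)) = 0 := by
    rw [idTensor_conjMap, conjTranspose_kronecker, conjTranspose_one, conjTranspose_kerProj,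
      Matrix.mul_assoc, hker, Matrix.mul_zero, idTensor_replaceMap]
    ext x y
    simp [ptraceRight]
  calc idTensor R (petzMap σ) (ptrace3E ρ)
      = idTensor R (conjMap (cfc Real.sqrt σ)) (idTensor R (tensorOneMap Q E)
          (idTensor R (conjMap (invSqrt σQ)) (ptrace3E ρ))) +
        idTensor R (replaceMap Q σ) (idTensor R (conjMap (kerProj σQ)) (ptrace3E ρ)) := rfl
    _ = ρ := by
        rw [hcompletion, add_zero, idTensor_conjMap, idTensor_conjMap, conjTranspose_kronecker,
          conjTranspose_kronecker, conjTranspose_cfc, conjTranspose_invSqrt, conjTranspose_one]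
        exact (eq_sqrt_mul_tensorOneHom_mul_sqrt hρ hMarkov).symm

end Recovery

lemma idTensor_ptraceRightMap_comp_conjMap {R A B C : Type*} [Fintype R] [DecidableEq R] [Fintype A]
    [Fintype C] (V : Matrix (B × C) A ℂ) (M : Matrix (R × A) (R × A) ℂ) :
    idTensor R (ptraceRightMap B C ∘ₗ conjMap V) M
      = ptrace3E (((1 : Matrix R R ℂ) ⊗ₖ V) * M * ((1 : Matrix R R ℂ) ⊗ₖ V)ᴴ) :=
  congrArg ptrace3E (idTensor_conjMap V M)

theorem stmt2_general {R Q E B : Type*} [Fintype R] [DecidableEq R] [Fintype Q] [DecidableEq Q]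
    [Fintype E] [DecidableEq E] [Fintype B] (ρ : Matrix (R × Q × E) (R × Q × E) ℂ)
    (hρ : IsState ρ) (hMarkov : condMutualInfo ρ = 0)
    (𝒩 : Matrix (Q × E) (Q × E) ℂ →ₗ[ℂ] Matrix B B ℂ) (h𝒩 : IsCPTP 𝒩) :
    ∃ ℰ : Matrix Q Q ℂ →ₗ[ℂ] Matrix B B ℂ, IsCPTP ℰ ∧
      idTensor R 𝒩 ρ = idTensor R ℰ (ptrace3E ρ) := by
  have hQE : IsState (ptraceLeft ρ) := ⟨posSemidef_ptraceLeft hρ.1, (trace_ptraceLeft ρ).trans hρ.2⟩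
  refine ⟨𝒩 ∘ₗ petzMap (ptraceLeft ρ), h𝒩.comp (isCPTP_petzMap hQE), ?_⟩
  exact congrArg (idTensor R 𝒩) (idTensor_petzMap_ptrace3E hρ.1 hMarkov).symm

/-- If `I(R;E|Q)_ρ = 0`, then every joint system-environment isometric
evolution yields CPTP reduced dynamics on the reference-system pair. -/
theorem stmt2 {R Q E : Type} [Fintype R] [DecidableEq R] [Fintype Q] [DecidableEq Q]
    [Fintype E] [DecidableEq E]
    (ρ : Matrix (R × Q × E) (R × Q × E) ℂ) (hρ : IsState ρ)
    (hMarkov : condMutualInfo ρ = 0) :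
    ∀ (Q' E' : Type) [Fintype Q'] [DecidableEq Q'] [Fintype E'] [DecidableEq E']
      (V : Matrix (Q' × E') (Q × E) ℂ), Vᴴ * V = 1 →
      ∃ ℰ : Matrix Q Q ℂ →ₗ[ℂ] Matrix Q' Q' ℂ, IsCPTP ℰ ∧
        ptrace3E (((1 : Matrix R R ℂ) ⊗ₖ V) * ρ * ((1 : Matrix R R ℂ) ⊗ₖ V)ᴴ)
          = idTensor R ℰ (ptrace3E ρ) := by
  intro Q' E' _ _ _ _ V hV
  simpa only [idTensor_ptraceRightMap_comp_conjMap] using stmt2_general ρ hρ hMarkov _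
    ((isCPTP_ptraceRightMap Q' E').comp (isCPTP_conjMap hV))
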